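/- Let m ≥ 2 be an integer and let Alt be the real vector space of alternating complex 2m×2m matrices (Aᵀ = −A), of real dimension 2m(2m−1). SU(2m) acts on Alt by g·A = g A gᵀ. For A ∈ Alt let S(A) = {X ∈ 𝔰𝔲(2m) : X·A + A·Xᵀ = 0} and T(A) = {X·A + A·Xᵀ : X ∈ 𝔰𝔲(2m)}. Then the minimum over all A ∈ Alt of dim_ℝ S(A) equals 3m, and the maximum over all A ∈ Alt of dim_ℝ T(A) equals 2m(2m−1) − (m+1). Equivalently, the representation of SU(2m) on Λ²ℂ²ᵐ has cohomogeneity m+1; in particular, for m = 5, 6, 7 (i.e. SU(10), SU(12), SU(14)) it has cohomogeneity 6, 7, 8 respectively. -/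

import Mathlib

open Matrix

/-- `S(A) = {X ∈ 𝔰𝔲(2m) : X·A + A·Xᵀ = 0}` (traceless skew-Hermitian matrices). -/
def stabSet19 {m : ℕ} (A : Matrix (Fin (2 * m)) (Fin (2 * m)) ℂ) :
    Set (Matrix (Fin (2 * m)) (Fin (2 * m)) ℂ) :=
  {X | Xᴴ = -X ∧ X.trace = 0 ∧ X * A + A * Xᵀ = 0}

/-- `T(A) = {X·A + A·Xᵀ : X ∈ 𝔰𝔲(2m)}`. -/
def tangSet19 {m : ℕ} (A : Matrix (Fin (2 * m)) (Fin (2 * m)) ℂ) :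
    Set (Matrix (Fin (2 * m)) (Fin (2 * m)) ℂ) :=
  {B | ∃ X : Matrix (Fin (2 * m)) (Fin (2 * m)) ℂ,
    Xᴴ = -X ∧ X.trace = 0 ∧ B = X * A + A * Xᵀ}

section general
variable {n : Type} [Fintype n] [DecidableEq n]

noncomputable def suSub19 (n : Type) [Fintype n] [DecidableEq n] : Submodule ℝ (Matrix n n ℂ) where
  carrier := {X | Xᴴ = -X ∧ X.trace = 0}
  add_mem' := by
    rintro a b ⟨h1, h2⟩ ⟨h3, h4⟩
    exact ⟨by rw [conjTranspose_add, h1, h3, neg_add], by rw [trace_add, h2, h4, add_zero]⟩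
  zero_mem' := by simp
  smul_mem' := by
    rintro c a ⟨h1, h2⟩
    exact ⟨by rw [conjTranspose_smul, h1]; simp, by rw [trace_smul, h2, smul_zero]⟩

noncomputable def actMap19 (A : Matrix n n ℂ) : Matrix n n ℂ →ₗ[ℝ] Matrix n n ℂ where
  toFun X := X * A + A * Xᵀ
  map_add' X Y := by rw [transpose_add]; noncomm_ring
  map_smul' c X := by simp [transpose_smul]

noncomputable def stSub19 (A : Matrix n n ℂ) : Submodule ℝ (Matrix n n ℂ) :=
  suSub19 n ⊓ LinearMap.ker (actMap19 A)

noncomputable def skSub19 (n : Type) [Fintype n] [DecidableEq n] : Submodule ℝ (Matrix n n ℂ) where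
  carrier := {X | Xᴴ = -X}
  add_mem' := by
    intro a b h1 h3
    simp only [Set.mem_ofPred_eq] at *
    rw [conjTranspose_add, h1, h3, neg_add]
  zero_mem' := by simp
  smul_mem' := by
    intro c a h1
    simp only [Set.mem_ofPred_eq] at *
    rw [conjTranspose_smul, h1]; simp

lemma finrank_sk19 : Module.finrank ℝ (skSub19 n) = Fintype.card n ^ 2 := by
  let f : (skSub19 n × skSub19 n) →ₗ[ℝ] Matrix n n ℂ :=
    LinearMap.coprod (skSub19 n).subtype
      ((Complex.I • (LinearMap.id : Matrix n n ℂ →ₗ[ℝ] Matrix n n ℂ)) ∘ₗ (skSub19 n).subtype)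
  have hf : ∀ a b, f (a, b) = (a : Matrix n n ℂ) + Complex.I • (b : Matrix n n ℂ) := by
    intro a b; simp [f]
  have hb : Function.Bijective f := by
    constructor
    · rw [← LinearMap.ker_eq_bot, LinearMap.ker_eq_bot']
      rintro ⟨⟨a, ha⟩, ⟨b, hb⟩⟩ h
      rw [hf] at h
      simp only at h
      have ha' : aᴴ = -a := ha
      have hb' : bᴴ = -b := hb
      have h2 := congrArg conjTranspose h
      rw [conjTranspose_add, conjTranspose_smul, ha', hb'] at h2
      simp only [RCLike.star_def, Complex.conj_I, smul_neg, neg_smul, neg_neg,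
        conjTranspose_zero] at h2
      have hIb : Complex.I • b = a := by
        rw [neg_add_eq_zero] at h2; exact h2.symm
      rw [hIb] at h
      have ha0 : a = 0 := by
        ext i j
        have := congrFun (congrFun h i) j
        simp only [Matrix.add_apply, Matrix.zero_apply] at this ⊢
        linear_combination this / 2
      rw [ha0] at hIb
      have hb0 : b = 0 := (smul_eq_zero.mp hIb).resolve_left Complex.I_ne_zero
      ext <;> simp [ha0, hb0]
    · intro M
      refine ⟨(⟨(1/2 : ℝ) • (M - Mᴴ), ?_⟩, ⟨(1/2 : ℝ) • ((-Complex.I) • (M + Mᴴ)), ?_⟩), ?_⟩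
      · change _ = _
        rw [conjTranspose_smul, conjTranspose_sub, conjTranspose_conjTranspose]
        simp [← smul_neg]
      · change _ = _
        rw [conjTranspose_smul, conjTranspose_smul, conjTranspose_add, conjTranspose_conjTranspose]
        simp [add_comm]
      · rw [hf]
        ext i j
        simp only [Matrix.add_apply, Matrix.smul_apply, Matrix.sub_apply, Complex.real_smul,
          smul_eq_mul]
        push_cast
        linear_combination (-1/2 * (M i j + Mᴴ i j)) * Complex.I_mul_I
  have h := (LinearEquiv.ofBijective f hb).finrank_eq
  rw [Module.finrank_prod, Module.finrank_matrix, Complex.finrank_real_complex] at h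
  nlinarith

lemma finrank_su19 [Nonempty n] : Module.finrank ℝ (suSub19 n) + 1 = Fintype.card n ^ 2 := by
  rw [← finrank_sk19 (n := n)]
  let t : Matrix n n ℂ →ₗ[ℝ] ℝ := Complex.imLm ∘ₗ (Matrix.traceLinearMap n ℝ ℂ)
  have hsu : suSub19 n = skSub19 n ⊓ LinearMap.ker t := by
    ext X
    constructor
    · rintro ⟨h1, h2⟩
      exact ⟨h1, by simp [t, h2]⟩
    · rintro ⟨h1, h2⟩
      refine ⟨h1, ?_⟩
      have h1' : Xᴴ = -X := h1
      have h3 := congrArg trace h1'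
      rw [trace_conjTranspose, trace_neg] at h3
      have h4 := congrArg Complex.re h3
      simp at h4
      have h2' : X.trace.im = 0 := h2
      apply Complex.ext
      · simp; linarith
      · simpa using h2'
  have hk := LinearMap.finrank_range_add_finrank_ker (t.domRestrict (skSub19 n))
  have hr : LinearMap.range (t.domRestrict (skSub19 n)) = ⊤ := by
    obtain ⟨i⟩ := (inferInstance : Nonempty n)
    rw [LinearMap.range_eq_top]
    intro r
    refine ⟨⟨Matrix.single i i (r * Complex.I), ?_⟩, ?_⟩
    · change _ = _
      ext a b
      rw [conjTranspose_single, Matrix.neg_apply, single_apply, single_apply]; split_ifs <;> simp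
    · simp [t]
  rw [hr, finrank_top, Module.finrank_self] at hk
  have he : Module.finrank ℝ (suSub19 n) =
      Module.finrank ℝ (LinearMap.ker (t.domRestrict (skSub19 n))) := by
    rw [hsu, LinearMap.ker_domRestrict, ← Submodule.map_comap_subtype]
    exact (Submodule.finrank_map_subtype_eq _ _)
  omega

lemma rank_null19 (A : Matrix n n ℂ) :
    Module.finrank ℝ ((suSub19 n).map (actMap19 A)) + Module.finrank ℝ (stSub19 A) =
      Module.finrank ℝ (suSub19 n) := by
  have hk := LinearMap.finrank_range_add_finrank_ker ((actMap19 A).domRestrict (suSub19 n))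
  rw [LinearMap.range_domRestrict] at hk
  rw [← hk]
  congr 1
  rw [stSub19, LinearMap.ker_domRestrict, ← Submodule.map_comap_subtype]
  exact (Submodule.finrank_map_subtype_eq _ _)

lemma stab_conj19 (A U : Matrix n n ℂ) (hU : U ∈ Matrix.unitaryGroup n ℂ) :
    Module.finrank ℝ (stSub19 (U * A * Uᵀ)) ≤ Module.finrank ℝ (stSub19 A) := by
  have h1 : Uᴴ * U = 1 := (Unitary.mem_iff.mp hU).1
  have h2 : U * Uᴴ = 1 := (Unitary.mem_iff.mp hU).2
  have h3 : Uᵀ * Uᴴᵀ = 1 := by rw [← transpose_mul, h1, transpose_one]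
  let f : Matrix n n ℂ →ₗ[ℝ] Matrix n n ℂ :=
    LinearMap.mulLeft ℝ Uᴴ ∘ₗ LinearMap.mulRight ℝ U
  have hf : ∀ X, f X = Uᴴ * (X * U) := fun X => rfl
  have hinj : Function.Injective f := by
    intro X Y h
    rw [hf, hf] at h
    have := congrArg (fun Z => U * Z * Uᴴ) h
    simpa [← mul_assoc, h2, mul_assoc X, mul_assoc Y] using this
  rw [(Submodule.equivMapOfInjective f hinj (stSub19 (U * A * Uᵀ))).finrank_eq]
  apply Submodule.finrank_mono
  rintro _ ⟨X, ⟨⟨hX1, hX2⟩, hX3⟩, rfl⟩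
  have hX3' : X * (U * A * Uᵀ) + (U * A * Uᵀ) * Xᵀ = 0 := hX3
  refine ⟨⟨?_, ?_⟩, ?_⟩
  · rw [hf, conjTranspose_mul, conjTranspose_mul, hX1, conjTranspose_conjTranspose]; noncomm_ring
  · rw [hf, trace_mul_comm, mul_assoc, h2, mul_one, hX2]
  · change f X * A + A * (f X)ᵀ = 0
    rw [hf, transpose_mul, transpose_mul]
    have := congrArg (fun Z => Uᴴ * Z * Uᴴᵀ) hX3'
    simp only [mul_add, add_mul, mul_zero, zero_mul] at this
    rw [← this]
    congr 1
    · simp only [mul_assoc, h3, mul_one]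
    · simp only [← mul_assoc, h1, one_mul]

end general
section crit
variable {n : Type} [Fintype n] [DecidableEq n]

lemma exists_max19 (D A : Matrix n n ℂ) : ∃ U ∈ Matrix.unitaryGroup n ℂ,
    ∀ V ∈ Matrix.unitaryGroup n ℂ,
      (trace (Dᴴ * (V * A * Vᵀ))).re ≤ (trace (Dᴴ * (U * A * Uᵀ))).re := by
  have hc : IsCompact ((Matrix.unitaryGroup n ℂ : Submonoid (Matrix n n ℂ)) :
      Set (Matrix n n ℂ)) := by
    have hK : IsCompact (Set.univ.pi fun _ : n => Set.univ.pi fun _ : n =>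
        Metric.closedBall (0 : ℂ) 1) :=
      isCompact_univ_pi fun _ => isCompact_univ_pi fun _ => isCompact_closedBall _ _
    refine IsCompact.of_isClosed_subset (X := Matrix n n ℂ) hK ?_ ?_
    · have : ((Matrix.unitaryGroup n ℂ : Submonoid (Matrix n n ℂ)) : Set (Matrix n n ℂ)) =
          {U | U * Uᴴ = 1} := by
        ext U; exact Matrix.mem_unitaryGroup_iff
      rw [this]
      exact isClosed_eq (by fun_prop) continuous_const
    · intro U hU i _ j _
      simpa using entry_norm_bound_of_unitary hU i j
  obtain ⟨U, hU, h⟩ := hc.exists_isMaxOn ⟨1, one_mem _⟩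
    (f := fun V : Matrix n n ℂ => (trace (Dᴴ * (V * A * Vᵀ))).re)
    (by apply Continuous.continuousOn; fun_prop)
  exact ⟨U, hU, fun V hV => h hV⟩

open scoped Matrix.Norms.L2Operator in
lemma crit19 (D A X : Matrix n n ℂ) (hX : Xᴴ = -X)
    (h : ∀ V ∈ Matrix.unitaryGroup n ℂ,
      (trace (Dᴴ * (V * A * Vᵀ))).re ≤ (trace (Dᴴ * A)).re) :
    (trace (Dᴴ * (X * A + A * Xᵀ))).re = 0 := by
  let L : Matrix n n ℂ →ₗ[ℝ] ℝ :=
    Complex.reLm ∘ₗ (Matrix.traceLinearMap n ℝ ℂ) ∘ₗ LinearMap.mulLeft ℝ Dᴴ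
  have hL : ∀ Y, L Y = (trace (Dᴴ * Y)).re := fun Y => rfl
  let g : ℝ → ℝ := fun t => L (NormedSpace.exp (t • X) * A * NormedSpace.exp (t • Xᵀ))
  have h1 := (((hasDerivAt_exp_smul_const X (0 : ℝ)).mul_const A).mul
    (hasDerivAt_exp_smul_const Xᵀ (0 : ℝ)))
  have hg : HasDerivAt g (L (X * A + A * Xᵀ)) 0 := by
    have := (LinearMap.toContinuousLinearMap L).hasFDerivAt.comp_hasDerivAt (0 : ℝ) h1
    have e : (LinearMap.toContinuousLinearMap L) (NormedSpace.exp ((0 : ℝ) • X) * X * A *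
        NormedSpace.exp ((0 : ℝ) • Xᵀ) + NormedSpace.exp ((0 : ℝ) • X) * A *
        (NormedSpace.exp ((0 : ℝ) • Xᵀ) * Xᵀ)) = L (X * A + A * Xᵀ) := by simp
    rw [← e]
    exact this
  have hmax : IsLocalMax g 0 := by
    refine Filter.Eventually.of_forall fun t => ?_
    have hu : NormedSpace.exp (t • X) ∈ Matrix.unitaryGroup n ℂ := by
      let +nondep : NormedAlgebra ℚ (Matrix n n ℂ) := .restrictScalars ℚ ℂ _
      apply NormedSpace.exp_mem_unitary_of_mem_skewAdjoint
      rw [skewAdjoint.mem_iff, star_smul, star_eq_conjTranspose, hX]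
      simp
    have := h _ hu
    rw [← Matrix.exp_transpose, transpose_smul] at this
    simpa [g, hL] using this
  rw [← hL]
  exact hmax.hasDerivAt_eq_zero hg

lemma herm19 (D A : Matrix n n ℂ) (hD : Dᵀ = -D) (hA : Aᵀ = -A)
    (h : ∀ V ∈ Matrix.unitaryGroup n ℂ,
      (trace (Dᴴ * (V * A * Vᵀ))).re ≤ (trace (Dᴴ * A)).re) :
    A * Dᴴ = D * Aᴴ := by
  have key : ∀ X : Matrix n n ℂ, Xᴴ = -X → (trace (X * (A * Dᴴ))).re = 0 := by
    intro X hX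
    have h1 := crit19 D A X hX h
    have hDt : Dᴴᵀ = -Dᴴ := by
      have := congrArg conjTranspose hD
      rw [conjTranspose_neg] at this
      rw [← this]; rfl
    have e1 : trace (Dᴴ * (X * A)) = trace (X * (A * Dᴴ)) := by
      rw [trace_mul_comm, mul_assoc]
    have e2 : trace (Dᴴ * (A * Xᵀ)) = trace (X * (A * Dᴴ)) := by
      rw [← trace_transpose, transpose_mul, transpose_mul, transpose_transpose, hDt, hA]
      simp [mul_assoc]
    rw [mul_add, trace_add, e1, e2, Complex.add_re] at h1
    linarith
  set M := A * Dᴴ with hM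
  have hM' : D * Aᴴ = Mᴴ := by rw [hM, conjTranspose_mul, conjTranspose_conjTranspose]
  rw [hM']
  set N := M - Mᴴ with hN
  have hNs : Nᴴ = -N := by rw [hN, conjTranspose_sub, conjTranspose_conjTranspose, neg_sub]
  have k1 := key N hNs
  have k2 : (trace (N * Mᴴ)).re = 0 := by
    have : trace (N * Mᴴ) = star (trace (Nᴴ * M)) := by
      rw [← trace_conjTranspose, conjTranspose_mul Nᴴ M, conjTranspose_conjTranspose N]
      exact Matrix.trace_mul_comm N Mᴴ
    rw [this, hNs, neg_mul, trace_neg]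
    simp [k1]
  have k3 : (trace (Nᴴ * N)).re = 0 := by
    rw [hNs, neg_mul, trace_neg]
    nth_rewrite 2 [hN]
    rw [mul_sub, trace_sub]
    simp [k1, k2]
  have k4 : trace (Nᴴ * N) = 0 := by
    apply Complex.ext
    · simpa using k3
    · have := congrArg Complex.im (trace_conjTranspose (Nᴴ * N))
      rw [conjTranspose_mul, conjTranspose_conjTranspose] at this
      simp at this
      simp; linarith
  have : N = 0 := by
    open scoped ComplexOrder in
    exact trace_conjTranspose_mul_self_eq_zero_iff.mp k4
  exact sub_eq_zero.mp this

end crit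
section spec
variable {m : ℕ}

def J19 : Matrix (Fin 2) (Fin 2) ℂ := !![0, 1; -1, 0]

noncomputable def D19 (m : ℕ) : Matrix (Fin 2 × Fin m) (Fin 2 × Fin m) ℂ :=
  blockDiagonal fun i : Fin m => ((i : ℕ) + 1 : ℂ) • J19

lemma D19_apply (s t : Fin 2) (i j : Fin m) :
    D19 m (s, i) (t, j) = if i = j then ((i : ℕ) + 1 : ℂ) * J19 s t else 0 := by
  simp [D19, blockDiagonal_apply]

lemma D19_transpose : (D19 m)ᵀ = -D19 m := by
  ext ⟨s, i⟩ ⟨t, j⟩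
  rw [transpose_apply, Matrix.neg_apply, D19_apply, D19_apply]
  by_cases h : i = j
  · subst h
    fin_cases s <;> fin_cases t <;> simp [J19]
  · simp [h, Ne.symm h]

lemma D19_conjTranspose : (D19 m)ᴴ = -D19 m := by
  ext ⟨s, i⟩ ⟨t, j⟩
  rw [conjTranspose_apply, Matrix.neg_apply, D19_apply, D19_apply]
  by_cases h : i = j
  · subst h
    fin_cases s <;> fin_cases t <;> simp [J19]
  · simp [h, Ne.symm h]

lemma eqs19 (Y : Matrix (Fin 2 × Fin m) (Fin 2 × Fin m) ℂ)
    (h : Y * D19 m = D19 m * Yᴴᵀ) (s t : Fin 2) (i j : Fin m) :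
    ((j : ℕ) + 1 : ℂ) * (Y (s, i) (0, j) * J19 0 t + Y (s, i) (1, j) * J19 1 t) =
    ((i : ℕ) + 1 : ℂ) * (J19 s 0 * star (Y (0, i) (t, j)) + J19 s 1 * star (Y (1, i) (t, j))) := by
  have := congrFun (congrFun h (s, i)) (t, j)
  simp only [mul_apply, Fintype.sum_prod_type, D19_apply, Fin.sum_univ_two, mul_ite, mul_zero,
    ite_mul, zero_mul, Finset.sum_ite_eq, Finset.sum_ite_eq', Finset.mem_univ, if_true,
    transpose_apply, conjTranspose_apply] at this
  linear_combination this

lemma offdiag19 (Y : Matrix (Fin 2 × Fin m) (Fin 2 × Fin m) ℂ)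
    (h : Y * D19 m = D19 m * Yᴴᵀ) (s t : Fin 2) (i j : Fin m) (hij : i ≠ j) :
    Y (s, i) (t, j) = 0 := by
  have e00 := eqs19 Y h 0 0 i j
  have e01 := eqs19 Y h 0 1 i j
  have e10 := congrArg star (eqs19 Y h 1 0 i j)
  have e11 := congrArg star (eqs19 Y h 1 1 i j)
  have e10' := eqs19 Y h 1 0 i j
  have e11' := eqs19 Y h 1 1 i j
  have e00' := congrArg star (eqs19 Y h 0 0 i j)
  have e01' := congrArg star (eqs19 Y h 0 1 i j)
  simp [J19] at e00 e01 e10 e11 e00' e01' e10' e11'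
  have hne : (((i : ℕ) + 1 : ℂ) ^ 2 - ((j : ℕ) + 1 : ℂ) ^ 2) ≠ 0 := by
    intro h0
    apply hij
    have : (((i : ℕ) + 1) ^ 2 : ℕ) = ((j : ℕ) + 1) ^ 2 := by
      have := sub_eq_zero.mp h0
      exact_mod_cast this
    have := Nat.pow_left_injective (n := 2) (by norm_num) this
    exact Fin.ext (by simpa using this)
  apply (mul_eq_zero.mp (_ : (((i : ℕ) + 1 : ℂ) ^ 2 - ((j : ℕ) + 1 : ℂ) ^ 2) * _ = 0)).resolve_left hne
  fin_cases s <;> fin_cases t <;> simp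
  all_goals grind

noncomputable def blk19 : (Fin m → ℝ × ℂ) →ₗ[ℝ] Matrix (Fin 2 × Fin m) (Fin 2 × Fin m) ℂ where
  toFun v := blockDiagonal fun i => !![(v i).1 * Complex.I, (v i).2; -star (v i).2, -((v i).1 * Complex.I)]
  map_add' v w := by
    rw [← blockDiagonal_add]
    congr 1; ext i s t
    fin_cases s <;> fin_cases t <;> simp <;> ring
  map_smul' c v := by
    rw [RingHom.id_apply, ← blockDiagonal_smul]
    congr 1; ext i s t
    fin_cases s <;> fin_cases t <;> simp <;> ring

lemma finrank_par19 : Module.finrank ℝ (Fin m → ℝ × ℂ) = 3 * m := by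
  rw [Module.finrank_pi_fintype]
  simp [Complex.finrank_real_complex, mul_comm]

lemma two19 (p z c : ℂ) : !![p, z; -star z, -p] * (c • J19) + (c • J19) * !![p, z; -star z, -p]ᵀ
    = 0 := by
  ext s t
  rw [Matrix.add_apply, mul_apply, mul_apply]
  fin_cases s <;> fin_cases t <;> simp [J19, Fin.sum_univ_two, mul_comm]

lemma lower_blk19 (A : Matrix (Fin 2 × Fin m) (Fin 2 × Fin m) ℂ) (hA : Aᵀ = -A)
    (h : ∀ s t i j, i ≠ j → A (s, i) (t, j) = 0) :
    3 * m ≤ Module.finrank ℝ (stSub19 A) := by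
  have hinj : Function.Injective (blk19 (m := m)) := by
    intro v w hvw
    simp only [blk19, LinearMap.coe_mk, AddHom.coe_mk] at hvw
    have h1 := blockDiagonal_injective hvw
    funext i
    have h2 := congrFun h1 i
    have h3 := congrFun (congrFun h2 0) 0
    have h4 := congrFun (congrFun h2 0) 1
    simp at h3 h4
    exact Prod.ext h3 h4
  rw [← finrank_par19, ← LinearMap.finrank_range_of_inj hinj]
  apply Submodule.finrank_mono
  rintro _ ⟨v, rfl⟩
  have hAe : ∀ p q, A q p = -A p q := fun p q => congrFun (congrFun hA p) q
  have hA' : A = blockDiagonal fun i => A (0, i) (1, i) • J19 := by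
    ext ⟨s, i⟩ ⟨t, j⟩
    rw [blockDiagonal_apply]
    by_cases hij : i = j
    · subst hij
      have h00 := hAe (0, i) (0, i)
      have h11 := hAe (1, i) (1, i)
      have h01 := hAe (0, i) (1, i)
      fin_cases s <;> fin_cases t <;> simp [J19]
      · linear_combination h00 / 2
      · exact h01
      · linear_combination h11 / 2
    · simp [hij, h s t i j hij]
  refine ⟨⟨?_, ?_⟩, ?_⟩
  · simp only [blk19, LinearMap.coe_mk, AddHom.coe_mk]
    rw [blockDiagonal_conjTranspose, ← blockDiagonal_neg]
    congr 1; ext i s t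
    fin_cases s <;> fin_cases t <;> simp
  · simp only [blk19, LinearMap.coe_mk, AddHom.coe_mk]
    simp [trace_blockDiagonal, trace_fin_two]
  · change blk19 v * A + A * (blk19 v)ᵀ = 0
    rw [hA']
    simp only [blk19, LinearMap.coe_mk, AddHom.coe_mk]
    rw [← blockDiagonal_mul, blockDiagonal_transpose, ← blockDiagonal_mul, ← blockDiagonal_add,
      ← blockDiagonal_zero]
    congr 1; funext i
    exact two19 _ _ _

lemma lower19 (A : Matrix (Fin 2 × Fin m) (Fin 2 × Fin m) ℂ) (hA : Aᵀ = -A) :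
    3 * m ≤ Module.finrank ℝ (stSub19 A) := by
  obtain ⟨U, hU, hmax⟩ := exists_max19 (D19 m) A
  have hA' : (U * A * Uᵀ)ᵀ = -(U * A * Uᵀ) := by
    rw [transpose_mul, transpose_mul, transpose_transpose, hA]; noncomm_ring
  refine le_trans ?_ (stab_conj19 A U hU)
  apply lower_blk19 _ hA'
  have hh := herm19 (D19 m) (U * A * Uᵀ) D19_transpose hA' (by
    intro V hV
    have := hmax (V * U) (mul_mem hV hU)
    simpa [transpose_mul, mul_assoc] using this)
  intro s t i j hij
  refine offdiag19 (U * A * Uᵀ) ?_ s t i j hij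
  have h2 : (U * A * Uᵀ)ᴴᵀ = -(U * A * Uᵀ)ᴴ := by
    have := congrArg conjTranspose hA'
    rw [conjTranspose_neg] at this
    rw [← this]; rfl
  rw [h2, mul_neg, ← hh, D19_conjTranspose, mul_neg, neg_neg]

lemma upper19 : Module.finrank ℝ (stSub19 (D19 m)) ≤ 3 * m := by
  rw [← finrank_par19]
  let f : Matrix (Fin 2 × Fin m) (Fin 2 × Fin m) ℂ →ₗ[ℝ] (Fin m → ℝ × ℂ) :=
    { toFun := fun X i => ((X (0, i) (0, i)).im, X (0, i) (1, i))
      map_add' := fun X Y => by ext i <;> simp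
      map_smul' := fun c X => by ext i <;> simp }
  apply LinearMap.finrank_le_finrank_of_injective (f := f.domRestrict (stSub19 (D19 m)))
  rw [← LinearMap.ker_eq_bot, LinearMap.ker_eq_bot']
  rintro ⟨X, ⟨⟨h1, h2⟩, h3⟩⟩ h
  have h3' : X * D19 m + D19 m * Xᵀ = 0 := h3
  have hY : X * D19 m = D19 m * Xᴴᵀ := by
    rw [h1, transpose_neg, mul_neg]; exact eq_neg_of_add_eq_zero_left h3'
  have hf : ∀ i, (X (0, i) (0, i)).im = 0 ∧ X (0, i) (1, i) = 0 := by
    intro i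
    have := congrFun h i
    exact Prod.ext_iff.mp this
  rw [Subtype.ext_iff]
  change X = 0
  ext ⟨s, i⟩ ⟨t, j⟩
  by_cases hij : i = j
  · subst hij
    obtain ⟨k1, k2⟩ := hf i
    have hs : ∀ p q, star (X q p) = - X p q := fun p q => congrFun (congrFun h1 p) q
    have a00 : X (0, i) (0, i) = 0 := by
      have := congrArg Complex.re (hs (0, i) (0, i))
      simp at this
      apply Complex.ext
      · simp; linarith
      · simpa using k1
    have a10 : X (1, i) (0, i) = 0 := by
      have := hs (1, i) (0, i)
      rw [k2] at this
      simpa using this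
    have a11 : X (1, i) (1, i) = 0 := by
      have e := eqs19 X hY 1 0 i i
      have hne : ((i : ℕ) + 1 : ℂ) ≠ 0 := Nat.cast_add_one_ne_zero _
      simpa [J19, a00, hne] using e
    fin_cases s <;> fin_cases t <;> simp [a00, a10, a11, k2]
  · simpa using offdiag19 X hY s t i j hij

lemma reindex19 {m : ℕ} (A : Matrix (Fin (2 * m)) (Fin (2 * m)) ℂ) :
    Module.finrank ℝ (stSub19 A) =
      Module.finrank ℝ (stSub19 (A.submatrix (finProdFinEquiv (m := 2) (n := m))
        (finProdFinEquiv (m := 2) (n := m)))) := by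
  set e := finProdFinEquiv (m := 2) (n := m)
  rw [← LinearEquiv.finrank_map_eq (Matrix.reindexLinearEquiv ℝ ℂ e.symm e.symm)]
  suffices hs : Submodule.map (Matrix.reindexLinearEquiv ℝ ℂ e.symm e.symm).toLinearMap (stSub19 A) =
      stSub19 (A.submatrix e e) by
    rw [hs]
  ext X
  constructor
  · rintro ⟨Y, ⟨⟨h1, h2⟩, h3⟩, rfl⟩
    have h3' : Y * A + A * Yᵀ = 0 := h3
    refine ⟨⟨?_, ?_⟩, ?_⟩
    · change (Y.submatrix e e)ᴴ = -(Y.submatrix e e)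
      rw [conjTranspose_submatrix, h1]; rfl
    · change (Y.submatrix e e).trace = 0
      rw [← h2]
      exact Equiv.sum_comp e fun i => Y i i
    · change Y.submatrix e e * A.submatrix e e + A.submatrix e e * (Y.submatrix e e)ᵀ = 0
      rw [transpose_submatrix, submatrix_mul_equiv, submatrix_mul_equiv]
      exact congrArg (fun Z => Z.submatrix e e) h3'
  · rintro ⟨⟨h1, h2⟩, h3⟩
    have h3' : X * A.submatrix e e + A.submatrix e e * Xᵀ = 0 := h3
    refine ⟨X.submatrix e.symm e.symm, ⟨⟨?_, ?_⟩, ?_⟩, ?_⟩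
    · rw [conjTranspose_submatrix, h1]; rfl
    · rw [← h2]
      exact Equiv.sum_comp e.symm fun i => X i i
    · change X.submatrix e.symm e.symm * A + A * (X.submatrix e.symm e.symm)ᵀ = 0
      have := congrArg (fun Z => Z.submatrix e.symm e.symm) h3'
      have hA : A = (A.submatrix e e).submatrix e.symm e.symm := by simp
      rw [hA, transpose_submatrix, submatrix_mul_equiv, submatrix_mul_equiv]
      exact this
    · ext i j; simp

end spec

theorem stmt19 (m : ℕ) (hm : 2 ≤ m) :
    IsLeast {d : ℕ | ∃ A : Matrix (Fin (2 * m)) (Fin (2 * m)) ℂ, Aᵀ = -A ∧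
        d = Module.finrank ℝ (Submodule.span ℝ (stabSet19 A))}
      (3 * m) ∧
    IsGreatest {d : ℕ | ∃ A : Matrix (Fin (2 * m)) (Fin (2 * m)) ℂ, Aᵀ = -A ∧
        d = Module.finrank ℝ (Submodule.span ℝ (tangSet19 A))}
      (2 * m * (2 * m - 1) - (m + 1)) := by
  have hS : ∀ A : Matrix (Fin (2 * m)) (Fin (2 * m)) ℂ,
      Submodule.span ℝ (stabSet19 A) = stSub19 A := by
    intro A
    have : stabSet19 A = (stSub19 A : Set _) := by
      ext X
      exact ⟨fun ⟨a, b, c⟩ => ⟨⟨a, b⟩, c⟩, fun ⟨⟨a, b⟩, c⟩ => ⟨a, b, c⟩⟩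
    rw [this, Submodule.span_eq]
  have hT : ∀ A : Matrix (Fin (2 * m)) (Fin (2 * m)) ℂ,
      Submodule.span ℝ (tangSet19 A) = (suSub19 _).map (actMap19 A) := by
    intro A
    have : tangSet19 A = ((suSub19 _).map (actMap19 A) : Set _) := by
      ext X
      exact ⟨fun ⟨Y, a, b, c⟩ => ⟨Y, ⟨a, b⟩, c.symm⟩, fun ⟨Y, ⟨a, b⟩, c⟩ => ⟨Y, a, b, c.symm⟩⟩
    rw [this, Submodule.span_eq]
  have hlow : ∀ A : Matrix (Fin (2 * m)) (Fin (2 * m)) ℂ, Aᵀ = -A →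
      3 * m ≤ Module.finrank ℝ (stSub19 A) := by
    intro A hA
    rw [reindex19]
    apply lower19
    rw [transpose_submatrix, hA]; rfl
  let e := finProdFinEquiv (m := 2) (n := m)
  let A0 : Matrix (Fin (2 * m)) (Fin (2 * m)) ℂ := (D19 m).submatrix e.symm e.symm
  have hA0 : A0ᵀ = -A0 := by
    rw [transpose_submatrix, D19_transpose]; rfl
  have h0 : Module.finrank ℝ (stSub19 A0) = 3 * m := by
    apply le_antisymm _ (hlow A0 hA0)
    rw [reindex19]
    have : A0.submatrix e e = D19 m := by ext; simp [A0]
    rw [this]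
    exact upper19
  have : Nonempty (Fin (2 * m)) := ⟨⟨0, by omega⟩⟩
  have hdim := finrank_su19 (n := Fin (2 * m))
  rw [Fintype.card_fin] at hdim
  have hN : (2 * m) ^ 2 = 2 * m * (2 * m - 1) + 2 * m := by
    obtain ⟨k, rfl⟩ : ∃ k, m = k + 1 := ⟨m - 1, by omega⟩
    have : 2 * (k + 1) - 1 = 2 * k + 1 := by omega
    rw [this]; ring
  refine ⟨⟨⟨A0, hA0, by rw [hS, h0]⟩, ?_⟩, ⟨⟨A0, hA0, ?_⟩, ?_⟩⟩
  · rintro d ⟨A, hA, rfl⟩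
    rw [hS]; exact hlow A hA
  · rw [hT]
    have := rank_null19 A0
    omega
  · rintro d ⟨A, hA, rfl⟩
    rw [hT]
    have := rank_null19 A
    have := hlow A hA
    omega
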